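/- Let 𝔄 be a model with at least two elements, let S ⊆ A be a nonempty finite set, let φ be a sentence of dependence logic, let y be a variable not occurring in φ, and let Y be a unary relation symbol occurring neither in φ nor in the vocabulary of 𝔄. Then (𝔄, Y↦S), {∅} ⊨ φ if and only if 𝔄, {∅}[S/y] ⊨ 𝕋_Y^y(φ), where 𝕋_Y^y(φ) := ∃u∃u'( u ≠ u' ∧ =(u) ∧ =(u') ∧ T_Y^y(φ) ). -/

import Mathlib

/- STATEMENT 9: Main translation lemma: (𝔄,Y↦S),{∅} ⊨ φ iff 𝔄,{∅}[S/y] ⊨ 𝕋_Y^y(φ). -/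

/-- Assignments with a finite domain: a variable outside the domain is sent to `none`. -/
abbrev PAssign (A : Type) := ℕ → Option A

/-- `s[a/x]`. -/
def pupdate {A : Type} (s : PAssign A) (x : ℕ) (a : A) : PAssign A :=
  fun w => if w = x then some a else s w

/-- A model for a purely relational vocabulary `σ` with arities `ar`. -/
structure TModel (σ : Type) (ar : σ → ℕ) : Type 1 where
  A : Type
  ne : Nonempty A
  rel : ∀ R : σ, (Fin (ar R) → A) → Prop

/-- Formulas of D⁺: first-order logic in negation normal form extended with dependence,
conditional independence, inclusion and exclusion atoms. -/
inductive TLForm (σ : Type) (ar : σ → ℕ) : Type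
  | rel (R : σ) (ts : Fin (ar R) → ℕ)
  | nrel (R : σ) (ts : Fin (ar R) → ℕ)
  | eq (x y : ℕ)
  | neq (x y : ℕ)
  | dep (k : ℕ) (xs : Fin k → ℕ) (x : ℕ)                          -- =(x₁,...,x_k,x)
  | incl (k : ℕ) (xs ys : Fin k → ℕ)                              -- x̄ ⊆ ȳ
  | excl (k : ℕ) (xs ys : Fin k → ℕ)                              -- x̄ | ȳ
  | cindep (k m p : ℕ) (xs : Fin k → ℕ) (zs : Fin m → ℕ) (ys : Fin p → ℕ)  -- x̄ ⊥_{z̄} ȳ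
  | and (φ ψ : TLForm σ ar)
  | or (φ ψ : TLForm σ ar)
  | all (x : ℕ) (φ : TLForm σ ar)
  | ex (x : ℕ) (φ : TLForm σ ar)

/-- Lax team semantics for D⁺. -/
def TSat {σ : Type} {ar : σ → ℕ} (M : TModel σ ar) : Set (PAssign M.A) → TLForm σ ar → Prop
  | U, .rel R ts => ∀ s ∈ U, ∃ vv : Fin (ar R) → M.A,
      (∀ i, s (ts i) = some (vv i)) ∧ M.rel R vv
  | U, .nrel R ts => ∀ s ∈ U, ∃ vv : Fin (ar R) → M.A,
      (∀ i, s (ts i) = some (vv i)) ∧ ¬ M.rel R vv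
  | U, .eq x y => ∀ s ∈ U, ∃ a : M.A, s x = some a ∧ s y = some a
  | U, .neq x y => ∀ s ∈ U, ∃ a b : M.A, s x = some a ∧ s y = some b ∧ a ≠ b
  | U, .dep _ xs x => ∀ s ∈ U, ∀ t ∈ U, (∀ i, s (xs i) = t (xs i)) → s x = t x
  | U, .incl _ xs ys => ∀ s ∈ U, ∃ t ∈ U, ∀ i, t (ys i) = s (xs i)
  | U, .excl _ xs ys => ∀ s ∈ U, ∀ t ∈ U, ¬ (∀ i, s (xs i) = t (ys i))
  | U, .cindep _ _ _ xs zs ys => ∀ s ∈ U, ∀ s' ∈ U, (∀ i, s (zs i) = s' (zs i)) →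
      ∃ t ∈ U, (∀ i, t (xs i) = s (xs i)) ∧ (∀ i, t (zs i) = s (zs i)) ∧
        (∀ i, t (ys i) = s' (ys i))
  | U, .and φ ψ => TSat M U φ ∧ TSat M U ψ
  | U, .or φ ψ => ∃ U₀ U₁ : Set (PAssign M.A),
      U₀ ⊆ U ∧ U₁ ⊆ U ∧ U₀ ∪ U₁ = U ∧ TSat M U₀ φ ∧ TSat M U₁ ψ
  | U, .all x φ => TSat M {t | ∃ s ∈ U, ∃ a : M.A, t = pupdate s x a} φ
  | U, .ex x φ => ∃ f : PAssign M.A → Set M.A, (∀ s ∈ U, (f s).Nonempty) ∧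
      TSat M {t | ∃ s ∈ U, ∃ a ∈ f s, t = pupdate s x a} φ


/-- Free variables of a D⁺ formula. -/
def TLForm.freeVars {σ : Type} {ar : σ → ℕ} : TLForm σ ar → Finset ℕ
  | .rel _ ts => Finset.univ.image ts
  | .nrel _ ts => Finset.univ.image ts
  | .eq x y => {x, y}
  | .neq x y => {x, y}
  | .dep _ xs x => insert x (Finset.univ.image xs)
  | .incl _ xs ys => Finset.univ.image xs ∪ Finset.univ.image ys
  | .excl _ xs ys => Finset.univ.image xs ∪ Finset.univ.image ys
  | .cindep _ _ _ xs zs ys =>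
      Finset.univ.image xs ∪ Finset.univ.image zs ∪ Finset.univ.image ys
  | .and φ ψ => φ.freeVars ∪ ψ.freeVars
  | .or φ ψ => φ.freeVars ∪ ψ.freeVars
  | .all x φ => φ.freeVars.erase x
  | .ex x φ => φ.freeVars.erase x

/-- All variables occurring in a D⁺ formula (free or bound). -/
def TLForm.vars {σ : Type} {ar : σ → ℕ} : TLForm σ ar → Finset ℕ
  | .rel _ ts => Finset.univ.image ts
  | .nrel _ ts => Finset.univ.image ts
  | .eq x y => {x, y}
  | .neq x y => {x, y}
  | .dep _ xs x => insert x (Finset.univ.image xs)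
  | .incl _ xs ys => Finset.univ.image xs ∪ Finset.univ.image ys
  | .excl _ xs ys => Finset.univ.image xs ∪ Finset.univ.image ys
  | .cindep _ _ _ xs zs ys =>
      Finset.univ.image xs ∪ Finset.univ.image zs ∪ Finset.univ.image ys
  | .and φ ψ => φ.vars ∪ ψ.vars
  | .or φ ψ => φ.vars ∪ ψ.vars
  | .all x φ => insert x φ.vars
  | .ex x φ => insert x φ.vars

/-- The formula is a formula of dependence logic: it uses only first-order constructs
and dependence atoms. -/
def TLForm.IsDL {σ : Type} {ar : σ → ℕ} : TLForm σ ar → Prop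
  | .rel _ _ => True
  | .nrel _ _ => True
  | .eq _ _ => True
  | .neq _ _ => True
  | .dep _ _ _ => True
  | .incl _ _ _ => False
  | .excl _ _ _ => False
  | .cindep _ _ _ _ _ _ => False
  | .and φ ψ => φ.IsDL ∧ ψ.IsDL
  | .or φ ψ => φ.IsDL ∧ ψ.IsDL
  | .all _ φ => φ.IsDL
  | .ex _ φ => φ.IsDL

/-- The relation symbol `R₀` occurs in the formula. -/
def TLForm.UsesRel {σ : Type} {ar : σ → ℕ} (R₀ : σ) : TLForm σ ar → Prop
  | .rel R _ => R = R₀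
  | .nrel R _ => R = R₀
  | .and φ ψ => φ.UsesRel R₀ ∨ ψ.UsesRel R₀
  | .or φ ψ => φ.UsesRel R₀ ∨ ψ.UsesRel R₀
  | .all _ φ => φ.UsesRel R₀
  | .ex _ φ => φ.UsesRel R₀
  | _ => False

/-- The vocabulary `τ ∪ {Y}` where `Y` is a fresh unary relation symbol (`Sum.inr ()`). -/
def arY {σ : Type} (ar : σ → ℕ) : σ ⊕ Unit → ℕ := Sum.elim ar fun _ => 1

/-- The expansion `(𝔄, Y ↦ S)` of `𝔄` interpreting the fresh unary symbol `Y` as `S`. -/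
def expandY {σ : Type} {ar : σ → ℕ} (M : TModel σ ar) (S : Set M.A) :
    TModel (σ ⊕ Unit) (arY ar) where
  A := M.A
  ne := M.ne
  rel := fun R => match R with
    | Sum.inl R' => M.rel R'
    | Sum.inr _ => fun w => w ⟨0, Nat.one_pos⟩ ∈ S

/-- The translation `T_Y^y` (with fixed parameter variables `y,v,u,u'`) from dependence
logic over `τ ∪ {Y}` into D⁺ over `τ`.  The `Finset` argument accumulates the variables
quantified superordinate to the current subformula in the translated sentence, and the
`Bool` argument records whether the current subformula is subordinate to a disjunction. -/
def Ttr {σ : Type} {ar : σ → ℕ} (y v u u' : ℕ) :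
    Finset ℕ → Bool → TLForm (σ ⊕ Unit) (arY ar) → TLForm σ ar
  | _, _, .rel (Sum.inl R) ts => .rel R ts
  | _, _, .rel (Sum.inr _) ts => .incl 1 (fun _ => ts ⟨0, Nat.one_pos⟩) (fun _ => y)
  | _, _, .nrel (Sum.inl R) ts => .nrel R ts
  | _, _, .nrel (Sum.inr _) ts => .excl 1 (fun _ => ts ⟨0, Nat.one_pos⟩) (fun _ => y)
  | _, _, .eq x z => .eq x z
  | _, _, .neq x z => .neq x z
  | _, _, .dep k xs x => .dep k xs x
  | _, _, .incl k xs ys => .incl k xs ys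
  | _, _, .excl k xs ys => .excl k xs ys
  | _, _, .cindep k m p xs zs ys => .cindep k m p xs zs ys
  | zs, b, .and φ ψ => .and (Ttr y v u u' zs b φ) (Ttr y v u u' zs b ψ)
  | zs, _, .or φ ψ =>
      let l := zs.sort (· ≤ ·)
      .ex v (.and (.cindep 1 l.length 1 (fun _ => v) l.get (fun _ => y))
        (.or (.and (Ttr y v u u' zs true φ) (.eq v u))
             (.and (Ttr y v u u' zs true ψ) (.eq v u'))))
  | zs, b, .all x φ => .all x (Ttr y v u u' (insert x zs) b φ)
  | zs, b, .ex x φ =>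
      let l := ((zs.erase x).sort (· ≤ ·))
      if b then
        .ex x (.and
          (.cindep 1 l.length 2 (fun _ => x) l.get (fun i => if i.val = 0 then y else v))
          (Ttr y v u u' (insert x zs) b φ))
      else
        .ex x (.and (.cindep 1 l.length 1 (fun _ => x) l.get (fun _ => y))
          (Ttr y v u u' (insert x zs) b φ))

/-- The restriction `s ↾ Z` of an assignment to the variables in `Z`. -/
def restrictP {A : Type} (s : PAssign A) (Z : Finset ℕ) : PAssign A :=
  fun x => if x ∈ Z then s x else none

/-- `(U,V)` is a suitable pair for `𝔄` (with domain `A`), `S ⊆ A`, `(y,v,u,u')` and a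
(sub)formula whose superordinately quantified variables are `Z` and which is subordinate
to a disjunction iff `subDisj`:
(1) the domain of `U` is `Z`, and the domain of `V` is `Z ∪ {y,u,u'}`, with `v` added
iff `subDisj`; (2) `U = V ↾ Z`; (3) `V = X[S/y]` for some team `X`; (4) all assignments
in `V` agree on `u` and on `u'`, with distinct values: `s(u) = t(u) ≠ t(u') = s(u')`. -/
def SuitablePair (A : Type) (S : Set A) (y v u u' : ℕ) (Z : Finset ℕ) (subDisj : Bool)
    (U V : Set (PAssign A)) : Prop :=
  (∀ s ∈ U, ∀ x : ℕ, (s x ≠ none ↔ x ∈ Z)) ∧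
  (∀ s ∈ V, ∀ x : ℕ,
    (s x ≠ none ↔ x ∈ (if subDisj then Z ∪ {y, v, u, u'} else Z ∪ {y, u, u'}))) ∧
  U = (fun s => restrictP s Z) '' V ∧
  (∃ X : Set (PAssign A), V = {t | ∃ s ∈ X, ∃ a ∈ S, t = pupdate s y a}) ∧
  (∀ s ∈ V, ∀ t ∈ V, s u = t u ∧ t u ≠ t u' ∧ t u' = s u')

/-- The empty assignment. -/
def emptyA {A : Type} : PAssign A := fun _ => none

/-!
A team `U` is encoded by the team in which `u` and `u'` hold two fixed distinct values and `y`
ranges over `S` independently of everything else. On such an encoding `Y(x)` can be read off as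
`x ⊆ y`. Given the values of the quantified variables, the only remaining freedom is that of `y`,
so the atom `x ⊥_{z̄} y` (or `x ⊥_{z̄} yv`) says exactly that the witnesses for `x` can be chosen
uniformly in `y`. Hence existential quantification commutes with the encoding. For a disjunction,
a nonempty set of values from `{u, u'}` for `v` at each assignment of `U` is the same as a cover
of `U` by two subteams, and within each disjunct `v` has become a further constant.
-/

theorem exists_flag_iff_exists_cover {α β : Type*} {a b : β} (hab : a ≠ b) (U : Set α)
    (P Q : Set α → Prop) :
    (∃ f : α → Set β, (∀ s ∈ U, (f s).Nonempty) ∧ (∀ s ∈ U, f s ⊆ {a, b}) ∧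
        P {s ∈ U | a ∈ f s} ∧ Q {s ∈ U | b ∈ f s}) ↔
      ∃ U₀ U₁ : Set α, U₀ ⊆ U ∧ U₁ ⊆ U ∧ U₀ ∪ U₁ = U ∧ P U₀ ∧ Q U₁ := by
  constructor
  · rintro ⟨f, hne, hsub, hP, hQ⟩
    refine ⟨_, _, Set.sep_subset _ _, Set.sep_subset _ _, ?_, hP, hQ⟩
    refine Set.Subset.antisymm (Set.union_subset (Set.sep_subset _ _) (Set.sep_subset _ _)) ?_
    intro s hs
    obtain ⟨d, hd⟩ := hne s hs
    rcases hsub s hs hd with rfl | rfl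
    · exact Or.inl ⟨hs, hd⟩
    · exact Or.inr ⟨hs, hd⟩
  · rintro ⟨U₀, U₁, -, -, rfl, hP, hQ⟩
    refine ⟨fun s => {d | d = a ∧ s ∈ U₀ ∨ d = b ∧ s ∈ U₁}, ?_, ?_, ?_, ?_⟩
    · rintro s (hs | hs)
      · exact ⟨a, Or.inl ⟨rfl, hs⟩⟩
      · exact ⟨b, Or.inr ⟨rfl, hs⟩⟩
    · rintro s - d (⟨rfl, -⟩ | ⟨rfl, -⟩) <;> simp
    · convert hP using 1
      ext s
      simp [hab]
    · convert hQ using 1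
      ext s
      simp [hab.symm]

section Teams

variable {A : Type}

theorem pupdate_self (s : PAssign A) (x : ℕ) (a : A) : pupdate s x a x = some a :=
  if_pos rfl

theorem pupdate_of_ne (s : PAssign A) {x w : ℕ} (a : A) (h : w ≠ x) :
    pupdate s x a w = s w :=
  if_neg h

theorem pupdate_comm (s : PAssign A) {x z : ℕ} (a b : A) (h : x ≠ z) :
    pupdate (pupdate s x a) z b = pupdate (pupdate s z b) x a := by
  funext w
  grind [pupdate]

theorem restrictP_of_mem (s : PAssign A) {Z : Finset ℕ} {w : ℕ} (h : w ∈ Z) :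
    restrictP s Z w = s w :=
  if_pos h

/-- The supplemented team `V[f/x]` of lax semantics. -/
def supplement (V : Set (PAssign A)) (x : ℕ) (f : PAssign A → Set A) : Set (PAssign A) :=
  {t | ∃ s ∈ V, ∃ a ∈ f s, t = pupdate s x a}

/-- `U` is a team with domain `Z`. -/
def HasDomain (U : Set (PAssign A)) (Z : Finset ℕ) : Prop :=
  ∀ s ∈ U, ∀ w, w ∈ Z ↔ (s w).isSome

/-- The assignment that follows `s` on the domain of `s` and `r` elsewhere. -/
def overlay (s r : PAssign A) : PAssign A :=
  fun w => (s w).or (r w)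

/-- The team obtained from `U` by giving all variables outside its domain the values that the
parameter assignment `r` prescribes, and then letting `y` range over `S` independently of all
other variables. Evaluating `φ` on `U` corresponds to evaluating its translation on this team. -/
def inflate (S : Set A) (y : ℕ) (r : PAssign A) (U : Set (PAssign A)) : Set (PAssign A) :=
  {t | ∃ s ∈ U, ∃ c ∈ S, t = pupdate (overlay s r) y c}

variable {S : Set A} {x y v w : ℕ} {Z : Finset ℕ} {r s t : PAssign A} {U : Set (PAssign A)}

theorem overlay_pupdate_left (s r : PAssign A) (x : ℕ) (a : A) :
    overlay (pupdate s x a) r = pupdate (overlay s r) x a := by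
  funext w
  by_cases h : w = x <;> simp [overlay, pupdate, h]

theorem overlay_pupdate_right (hs : s x = none) (r : PAssign A) (a : A) :
    overlay s (pupdate r x a) = pupdate (overlay s r) x a := by
  funext w
  by_cases h : w = x <;> simp [overlay, pupdate, h, hs]

theorem HasDomain.eq_none (hU : HasDomain U Z) (hs : s ∈ U) (hw : w ∉ Z) : s w = none := by
  simpa [hU s hs] using hw

theorem HasDomain.exists_eq_some (hU : HasDomain U Z) (hs : s ∈ U) (hw : w ∈ Z) :
    ∃ a, s w = some a :=
  Option.isSome_iff_exists.1 ((hU s hs w).1 hw)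

theorem HasDomain.mono {U₀ : Set (PAssign A)} (hU : HasDomain U Z) (h : U₀ ⊆ U) :
    HasDomain U₀ Z :=
  fun s hs => hU s (h hs)

theorem HasDomain.supplement (hU : HasDomain U Z) (x : ℕ) (f : PAssign A → Set A) :
    HasDomain (supplement U x f) (insert x Z) := by
  rintro _ ⟨s, hs, a, -, rfl⟩ w
  by_cases h : w = x <;> simp [pupdate, h, hU s hs]

theorem HasDomain.overlay_of_mem (hU : HasDomain U Z) (hs : s ∈ U) (hw : w ∈ Z) :
    overlay s r w = s w := by
  obtain ⟨a, ha⟩ := hU.exists_eq_some hs hw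
  simp [overlay, ha]

theorem HasDomain.overlay_of_notMem (hU : HasDomain U Z) (hs : s ∈ U) (hw : w ∉ Z) :
    overlay s r w = r w := by
  simp [overlay, hU.eq_none hs hw]

theorem restrictP_pupdate_overlay (hU : HasDomain U Z) (hs : s ∈ U) (hy : y ∉ Z) (c : A) :
    restrictP (pupdate (overlay s r) y c) Z = s := by
  funext w
  by_cases hw : w ∈ Z
  · rw [restrictP_of_mem _ hw, pupdate_of_ne _ _ (ne_of_mem_of_not_mem hw hy),
      hU.overlay_of_mem hs hw]
  · rw [hU.eq_none hs hw, restrictP, if_neg hw]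

theorem image_restrictP_inflate (hU : HasDomain U Z) (hS : S.Nonempty) (hy : y ∉ Z) :
    (fun t => restrictP t Z) '' inflate S y r U = U := by
  ext s
  constructor
  · rintro ⟨_, ⟨s, hs, c, -, rfl⟩, rfl⟩
    exact Set.mem_of_eq_of_mem (restrictP_pupdate_overlay hU hs hy c) hs
  · intro hs
    obtain ⟨c, hc⟩ := hS
    exact ⟨_, ⟨s, hs, c, hc, rfl⟩, restrictP_pupdate_overlay hU hs hy c⟩

theorem apply_of_mem_inflate (hU : HasDomain U Z) (ht : t ∈ inflate S y r U) (hw : w ∉ Z)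
    (hwy : w ≠ y) : t w = r w := by
  obtain ⟨s, hs, c, -, rfl⟩ := ht
  rw [pupdate_of_ne _ _ hwy, hU.overlay_of_notMem hs hw]

theorem inflate_nonempty (hS : S.Nonempty) (hU : U.Nonempty) : (inflate S y r U).Nonempty := by
  obtain ⟨s, hs⟩ := hU
  obtain ⟨c, hc⟩ := hS
  exact ⟨_, s, hs, c, hc, rfl⟩

theorem inflate_supplement (hxy : x ≠ y) {f g : PAssign A → Set A}
    (hfg : ∀ s ∈ U, ∀ c ∈ S, g (pupdate (overlay s r) y c) = f s) :
    inflate S y r (supplement U x f) = supplement (inflate S y r U) x g := by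
  ext t
  constructor
  · rintro ⟨_, ⟨s, hs, a, ha, rfl⟩, c, hc, rfl⟩
    refine ⟨_, ⟨s, hs, c, hc, rfl⟩, a, (hfg s hs c hc).symm ▸ ha, ?_⟩
    rw [overlay_pupdate_left, pupdate_comm _ _ _ hxy]
  · rintro ⟨_, ⟨s, hs, c, hc, rfl⟩, a, ha, rfl⟩
    refine ⟨_, ⟨s, hs, a, hfg s hs c hc ▸ ha, rfl⟩, c, hc, ?_⟩
    rw [overlay_pupdate_left, pupdate_comm _ _ _ hxy]

theorem sep_inflate_supplement (hU : HasDomain U Z) (hv : v ∉ Z) (hvy : v ≠ y)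
    (f : PAssign A → Set A) (a : A) :
    {t ∈ inflate S y r (supplement U v f) | t v = some a} =
      inflate S y (pupdate r v a) {s ∈ U | a ∈ f s} := by
  have overlay_eq : ∀ s ∈ U, ∀ b,
      overlay s (pupdate r v b) = overlay (pupdate s v b) r := fun s hs b => by
    rw [overlay_pupdate_right (hU.eq_none hs hv), overlay_pupdate_left]
  ext t
  constructor
  · rintro ⟨⟨_, ⟨s, hs, b, hb, rfl⟩, c, hc, rfl⟩, hba⟩
    rw [pupdate_of_ne _ _ hvy, overlay_pupdate_left, pupdate_self, Option.some_inj] at hba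
    subst hba
    exact ⟨s, ⟨hs, hb⟩, c, hc, by rw [overlay_eq s hs]⟩
  · rintro ⟨s, ⟨hs, ha⟩, c, hc, rfl⟩
    refine ⟨⟨_, ⟨s, hs, a, ha, rfl⟩, c, hc, by rw [overlay_eq s hs]⟩, ?_⟩
    rw [pupdate_of_ne _ _ hvy, overlay_eq s hs, overlay_pupdate_left, pupdate_self]

theorem forall_inflate_supplement_iff (hS : S.Nonempty) (hvy : v ≠ y)
    (f : PAssign A → Set A) (a b : A) :
    (∀ t ∈ inflate S y r (supplement U v f), t v = some a ∨ t v = some b) ↔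
      ∀ s ∈ U, f s ⊆ {a, b} := by
  have apply_v : ∀ (s : PAssign A) (d c : A),
      pupdate (overlay (pupdate s v d) r) y c v = some d := fun s d c => by
    rw [pupdate_of_ne _ _ hvy, overlay_pupdate_left, pupdate_self]
  constructor
  · intro h s hs d hd
    obtain ⟨c, hc⟩ := hS
    simpa [apply_v] using h _ ⟨_, ⟨s, hs, d, hd, rfl⟩, c, hc, rfl⟩
  · rintro h _ ⟨_, ⟨s, hs, d, hd, rfl⟩, c, -, rfl⟩
    simpa [apply_v] using h s hs hd

theorem supplement_nonempty (hU : U.Nonempty) {f : PAssign A → Set A}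
    (hf : ∀ s ∈ U, (f s).Nonempty) : (supplement U x f).Nonempty := by
  obtain ⟨s, hs⟩ := hU
  obtain ⟨a, ha⟩ := hf s hs
  exact ⟨_, s, hs, a, ha, rfl⟩

theorem apply_of_mem_supplement_of_ne {V : Set (PAssign A)} {f : PAssign A → Set A}
    (ht : t ∈ supplement V x f) (hwx : w ≠ x) : ∃ s ∈ V, t w = s w := by
  obtain ⟨s, hs, a, -, rfl⟩ := ht
  exact ⟨s, hs, pupdate_of_ne s a hwx⟩

theorem apply_of_mem_supplement_singleton {V : Set (PAssign A)} {a : A}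
    (ht : t ∈ supplement V x fun _ => {a}) : t x = some a := by
  obtain ⟨s, -, _, rfl, rfl⟩ := ht
  exact pupdate_self s x _

theorem exists_eq_supplement_const (hU : U.Nonempty) {f : PAssign A → Set A}
    (hf : ∀ s ∈ U, (f s).Nonempty)
    (hconst : ∀ s ∈ supplement U x f, ∀ t ∈ supplement U x f, s x = t x) :
    ∃ a, supplement U x f = supplement U x fun _ => {a} := by
  obtain ⟨s₀, hs₀⟩ := hU
  obtain ⟨a, ha⟩ := hf s₀ hs₀
  have eq_a : ∀ s ∈ U, ∀ b ∈ f s, b = a := fun s hs b hb => by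
    simpa [pupdate_self] using hconst _ ⟨s, hs, b, hb, rfl⟩ _ ⟨s₀, hs₀, a, ha, rfl⟩
  refine ⟨a, Set.ext fun t => ⟨?_, ?_⟩⟩
  · rintro ⟨s, hs, b, hb, rfl⟩
    exact ⟨s, hs, b, eq_a s hs b hb, rfl⟩
  · rintro ⟨s, hs, _, rfl, rfl⟩
    obtain ⟨b, hb⟩ := hf s hs
    exact ⟨s, hs, b, hb, by rw [eq_a s hs b hb]⟩

theorem supplement_inflate_singleton (hU : HasDomain U Z) (hx : x ∉ Z) (hxy : x ≠ y) (a : A) :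
    supplement (inflate S y r U) x (fun _ => {a}) = inflate S y (pupdate r x a) U := by
  have overlay_eq : ∀ s ∈ U, ∀ c, pupdate (overlay s (pupdate r x a)) y c =
      pupdate (pupdate (overlay s r) y c) x a := fun s hs c => by
    rw [overlay_pupdate_right (hU.eq_none hs hx), pupdate_comm _ _ _ hxy]
  ext t
  constructor
  · rintro ⟨_, ⟨s, hs, c, hc, rfl⟩, _, rfl, rfl⟩
    exact ⟨s, hs, c, hc, (overlay_eq s hs c).symm⟩
  · rintro ⟨s, hs, c, hc, rfl⟩
    exact ⟨_, ⟨s, hs, c, hc, rfl⟩, a, rfl, overlay_eq s hs c⟩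

theorem hasDomain_singleton_emptyA : HasDomain {(emptyA : PAssign A)} ∅ := by
  simp [HasDomain, emptyA]

theorem inflate_singleton_emptyA :
    inflate S y emptyA {emptyA} = {t | ∃ c ∈ S, t = pupdate emptyA y c} := by
  have overlay_emptyA : overlay (emptyA : PAssign A) emptyA = emptyA := rfl
  simp [inflate, overlay_emptyA]

end Teams

section Satisfaction

variable {σ : Type} {ar : σ → ℕ} {M : TModel σ ar} {S : Set M.A} {y x : ℕ} {Z : Finset ℕ}
  {r : PAssign M.A} {U V : Set (PAssign M.A)}

/-- Literals and atoms: the formulas without a connective or quantifier. -/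
def TLForm.IsAtomic : TLForm σ ar → Prop
  | .and _ _ => False
  | .or _ _ => False
  | .all _ _ => False
  | .ex _ _ => False
  | _ => True

theorem TSat_image_restrictP_iff {φ : TLForm σ ar} (hφ : φ.IsAtomic) (hZ : φ.freeVars ⊆ Z) :
    TSat M ((fun t => restrictP t Z) '' V) φ ↔ TSat M V φ := by
  have apply_eq : ∀ w ∈ φ.freeVars, ∀ t : PAssign M.A, restrictP t Z w = t w :=
    fun w hw t => restrictP_of_mem t (hZ hw)
  cases φ with
  | and | or | all | ex => exact hφ.elim
  | _ => simp_all [TSat, TLForm.freeVars]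

theorem TSat_inflate_iff {φ : TLForm σ ar} (hφ : φ.IsAtomic) (hU : HasDomain U Z)
    (hS : S.Nonempty) (hy : y ∉ Z) (hZ : φ.freeVars ⊆ Z) :
    TSat M (inflate S y r U) φ ↔ TSat M U φ := by
  rw [← TSat_image_restrictP_iff hφ hZ, image_restrictP_inflate hU hS hy]

theorem TSat_incl_inflate_iff {w : ℕ} (hU : HasDomain U Z) (hS : S.Nonempty) (hy : y ∉ Z)
    (hw : w ∈ Z) :
    TSat M (inflate S y r U) (.incl 1 (fun _ => w) fun _ => y) ↔
      ∀ s ∈ U, ∃ a ∈ S, s w = some a := by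
  have hwy : w ≠ y := ne_of_mem_of_not_mem hw hy
  constructor
  · intro h s hs
    obtain ⟨c, hc⟩ := hS
    obtain ⟨_, ⟨s', -, a, ha, rfl⟩, hsa⟩ := h _ ⟨s, hs, c, hc, rfl⟩
    refine ⟨a, ha, ?_⟩
    simpa [pupdate, hwy, hU.overlay_of_mem hs hw] using (hsa 0).symm
  · rintro h _ ⟨s, hs, c, -, rfl⟩
    obtain ⟨a, ha, hsa⟩ := h s hs
    refine ⟨_, ⟨s, hs, a, ha, rfl⟩, fun _ => ?_⟩
    rw [pupdate_self, pupdate_of_ne _ _ hwy, hU.overlay_of_mem hs hw, hsa]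

theorem TSat_excl_inflate_iff {w : ℕ} (hU : HasDomain U Z) (hy : y ∉ Z)
    (hw : w ∈ Z) :
    TSat M (inflate S y r U) (.excl 1 (fun _ => w) fun _ => y) ↔
      ∀ s ∈ U, ∃ a ∉ S, s w = some a := by
  have hwy : w ≠ y := ne_of_mem_of_not_mem hw hy
  constructor
  · intro h s hs
    obtain ⟨a, hsa⟩ := hU.exists_eq_some hs hw
    refine ⟨a, fun ha => ?_, hsa⟩
    refine h _ ⟨s, hs, a, ha, rfl⟩ _ ⟨s, hs, a, ha, rfl⟩ fun _ => ?_
    rw [pupdate_self, pupdate_of_ne _ _ hwy, hU.overlay_of_mem hs hw, hsa]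
  · rintro h _ ⟨s, hs, c, -, rfl⟩ _ ⟨s', -, d, hd, rfl⟩ heq
    obtain ⟨a, ha, hsa⟩ := h s hs
    have : a = d := by
      simpa [pupdate, hwy, hU.overlay_of_mem hs hw, hsa] using heq 0
    exact ha (this ▸ hd)

theorem TSat_all_iff (φ : TLForm σ ar) :
    TSat M V (.all x φ) ↔ TSat M (supplement V x fun _ => Set.univ) φ := by
  simp [TSat, supplement]

theorem TSat_all_inflate_iff (hxy : x ≠ y) (φ : TLForm σ ar) :
    TSat M (inflate S y r U) (.all x φ) ↔
      TSat M (inflate S y r (supplement U x fun _ => Set.univ)) φ := by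
  rw [TSat_all_iff,
    inflate_supplement (f := fun _ => Set.univ) (g := fun _ => Set.univ) hxy fun _ _ _ _ => rfl]

theorem TSat_cindep_inflate (hU : HasDomain U Z) {k m p : ℕ} {xs : Fin k → ℕ} {zs : Fin m → ℕ}
    {ys : Fin p → ℕ} (hxs : ∀ i, xs i ≠ y) (hzs : ∀ i, zs i ≠ y)
    (hys : ∀ i, ys i = y ∨ ys i ∉ Z) : TSat M (inflate S y r U) (.cindep k m p xs zs ys) := by
  rintro _ ⟨s, hs, c, -, rfl⟩ _ ⟨s', hs', d, hd, rfl⟩ -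
  refine ⟨_, ⟨s, hs, d, hd, rfl⟩, fun i => ?_, fun i => ?_, fun i => ?_⟩
  · simp only [pupdate_of_ne _ _ (hxs i)]
  · simp only [pupdate_of_ne _ _ (hzs i)]
  · rcases eq_or_ne (ys i) y with h | h
    · rw [h, pupdate_self, pupdate_self]
    · have hi := (hys i).resolve_left h
      simp only [pupdate_of_ne _ _ h, hU.overlay_of_notMem hs hi, hU.overlay_of_notMem hs' hi]

theorem pupdate_mem_supplement_of_cindep (hU : HasDomain U Z) (hy : y ∉ Z) (hxy : x ≠ y)
    {m p : ℕ} {zs : Fin m → ℕ} {ys : Fin p → ℕ} (hzs : Set.range zs = Z.erase x)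
    (hys : ∃ i, ys i = y) {g : PAssign M.A → Set M.A}
    (hg : ∀ t ∈ inflate S y r U, (g t).Nonempty)
    (hind : TSat M (supplement (inflate S y r U) x g) (.cindep 1 m p (fun _ => x) zs ys))
    {s : PAssign M.A} (hs : s ∈ U) {c d a : M.A} (hc : c ∈ S) (hd : d ∈ S)
    (ha : a ∈ g (pupdate (overlay s r) y c)) :
    pupdate (pupdate (overlay s r) y d) x a ∈ supplement (inflate S y r U) x g := by
  obtain ⟨i, hi⟩ := hys
  obtain ⟨b, hb⟩ := hg _ ⟨s, hs, d, hd, rfl⟩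
  have ne_of_range : ∀ j, zs j ∈ Z ∧ zs j ≠ x ∧ zs j ≠ y := fun j => by
    have hj : zs j ∈ (Z.erase x : Set ℕ) := hzs ▸ Set.mem_range_self j
    simp only [Finset.coe_erase] at hj
    exact ⟨hj.1, hj.2, ne_of_mem_of_not_mem hj.1 hy⟩
  obtain ⟨t, ht, htx, htz, hty⟩ := hind _ ⟨_, ⟨s, hs, c, hc, rfl⟩, a, ha, rfl⟩
    _ ⟨_, ⟨s, hs, d, hd, rfl⟩, b, hb, rfl⟩ fun j => by
      obtain ⟨-, hjx, hjy⟩ := ne_of_range j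
      simp only [pupdate_of_ne _ _ hjx, pupdate_of_ne _ _ hjy]
  suffices t = pupdate (pupdate (overlay s r) y d) x a from this ▸ ht
  funext w
  rcases eq_or_ne w x with rfl | hwx
  · simpa only [pupdate_self] using htx 0
  rcases eq_or_ne w y with rfl | hwy
  · simpa only [hi, pupdate_of_ne _ _ hwx, pupdate_self] using hty i
  by_cases hwZ : w ∈ Z
  · obtain ⟨j, rfl⟩ : w ∈ Set.range zs := by
      rw [hzs]
      exact Finset.mem_coe.2 (Finset.mem_erase.2 ⟨hwx, hwZ⟩)
    simpa only [pupdate_of_ne _ _ hwx, pupdate_of_ne _ _ hwy] using htz j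
  · obtain ⟨t', ht', b', -, rfl⟩ := ht
    rw [pupdate_of_ne _ _ hwx, pupdate_of_ne _ _ hwx, pupdate_of_ne _ _ hwy,
      apply_of_mem_inflate hU ht' hwZ hwy, hU.overlay_of_notMem hs hwZ]

theorem inflate_supplement_of_cindep (hU : HasDomain U Z) (hy : y ∉ Z) (hxy : x ≠ y)
    {m p : ℕ} {zs : Fin m → ℕ} {ys : Fin p → ℕ} (hzs : Set.range zs = Z.erase x)
    (hys : ∃ i, ys i = y) {g : PAssign M.A → Set M.A}
    (hg : ∀ t ∈ inflate S y r U, (g t).Nonempty)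
    (hind : TSat M (supplement (inflate S y r U) x g) (.cindep 1 m p (fun _ => x) zs ys)) :
    inflate S y r (supplement U x fun s => {a | ∃ c ∈ S, a ∈ g (pupdate (overlay s r) y c)}) =
      supplement (inflate S y r U) x g := by
  ext t
  constructor
  · rintro ⟨_, ⟨s, hs, a, ⟨c, hc, ha⟩, rfl⟩, d, hd, rfl⟩
    rw [overlay_pupdate_left, pupdate_comm _ _ _ hxy]
    exact pupdate_mem_supplement_of_cindep hU hy hxy hzs hys hg hind hs hc hd ha
  · rintro ⟨_, ⟨s, hs, c, hc, rfl⟩, a, ha, rfl⟩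
    refine ⟨_, ⟨s, hs, a, ⟨c, hc, ha⟩, rfl⟩, c, hc, ?_⟩
    rw [overlay_pupdate_left, pupdate_comm _ _ _ hxy]

theorem TSat_ex_cindep_inflate_iff (hU : HasDomain U Z) (hS : S.Nonempty) (hy : y ∉ Z)
    (hxy : x ≠ y) {m p : ℕ} {zs : Fin m → ℕ} {ys : Fin p → ℕ}
    (hzs : Set.range zs = Z.erase x) (hys : ∃ i, ys i = y)
    (hys' : ∀ i, ys i = y ∨ ys i ∉ insert x Z) (ψ : TLForm σ ar) :
    TSat M (inflate S y r U) (.ex x (.and (.cindep 1 m p (fun _ => x) zs ys) ψ)) ↔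
      ∃ f : PAssign M.A → Set M.A, (∀ s ∈ U, (f s).Nonempty) ∧
        TSat M (inflate S y r (supplement U x f)) ψ := by
  constructor
  · rintro ⟨g, hg, hind, hψ⟩
    refine ⟨fun s => {a | ∃ c ∈ S, a ∈ g (pupdate (overlay s r) y c)}, fun s hs => ?_, ?_⟩
    · obtain ⟨c, hc⟩ := hS
      obtain ⟨a, ha⟩ := hg _ ⟨s, hs, c, hc, rfl⟩
      exact ⟨a, c, hc, ha⟩
    · rw [inflate_supplement_of_cindep hU hy hxy hzs hys hg hind]
      exact hψ
  · rintro ⟨f, hf, hψ⟩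
    have exchange : inflate S y r (supplement U x f) =
        supplement (inflate S y r U) x fun t => f (restrictP t Z) :=
      inflate_supplement hxy fun s hs c _ => by rw [restrictP_pupdate_overlay hU hs hy]
    have zs_ne : ∀ j, zs j ≠ y := fun j hj => by
      have : y ∈ (Z.erase x : Set ℕ) := hzs ▸ ⟨j, hj⟩
      exact hy (Finset.mem_of_mem_erase (Finset.mem_coe.1 this))
    refine ⟨fun t => f (restrictP t Z), ?_, ?_⟩
    · rintro _ ⟨s, hs, c, -, rfl⟩
      simpa only [restrictP_pupdate_overlay hU hs hy] using hf s hs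
    · change TSat M (supplement _ _ _) _
      rw [← exchange]
      exact ⟨TSat_cindep_inflate (hU.supplement x f) (fun _ => hxy) zs_ne hys', hψ⟩

theorem TSat_or_and_eq_iff {v u u' : ℕ} {a b : M.A} (hab : a ≠ b)
    (hu : ∀ t ∈ V, t u = some a) (hu' : ∀ t ∈ V, t u' = some b) (φ ψ : TLForm σ ar) :
    TSat M V (.or (.and φ (.eq v u)) (.and ψ (.eq v u'))) ↔
      (∀ t ∈ V, t v = some a ∨ t v = some b) ∧
        TSat M {t ∈ V | t v = some a} φ ∧ TSat M {t ∈ V | t v = some b} ψ := by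
  constructor
  · rintro ⟨V₀, V₁, h₀, h₁, rfl, ⟨hφ, heq₀⟩, hψ, heq₁⟩
    have val₀ : ∀ t ∈ V₀, t v = some a := fun t ht => by
      obtain ⟨c, hc, hc'⟩ := heq₀ t ht
      rw [hc, ← hc', hu t (h₀ ht)]
    have val₁ : ∀ t ∈ V₁, t v = some b := fun t ht => by
      obtain ⟨c, hc, hc'⟩ := heq₁ t ht
      rw [hc, ← hc', hu' t (h₁ ht)]
    have sep₀ : {t ∈ V₀ ∪ V₁ | t v = some a} = V₀ := by
      ext t
      have := val₀ t
      have := val₁ t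
      grind
    have sep₁ : {t ∈ V₀ ∪ V₁ | t v = some b} = V₁ := by
      ext t
      have := val₀ t
      have := val₁ t
      grind
    rw [sep₀, sep₁]
    exact ⟨fun t ht => ht.imp (val₀ t) (val₁ t), hφ, hψ⟩
  · rintro ⟨hval, hφ, hψ⟩
    refine ⟨_, _, Set.sep_subset _ _, Set.sep_subset _ _, ?_,
      ⟨hφ, fun t ht => ⟨a, ht.2, hu t ht.1⟩⟩, hψ, fun t ht => ⟨b, ht.2, hu' t ht.1⟩⟩
    ext t
    have := hval t
    grind

theorem TSat_ex_ex_dep_iff (hV : V.Nonempty) {u u' : ℕ} (huu' : u ≠ u') (φ : TLForm σ ar) :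
    TSat M V (.ex u (.ex u' (.and (.neq u u') (.and (.dep 0 Fin.elim0 u)
        (.and (.dep 0 Fin.elim0 u') φ))))) ↔
      ∃ a b : M.A, a ≠ b ∧
        TSat M (supplement (supplement V u fun _ => {a}) u' fun _ => {b}) φ := by
  have apply_fst : ∀ {a b : M.A},
      ∀ t ∈ supplement (supplement V u fun _ => {a}) u' (fun _ => {b}), t u = some a := by
    intro a b t ht
    obtain ⟨s, hs, hts⟩ := apply_of_mem_supplement_of_ne ht huu'
    rw [hts, apply_of_mem_supplement_singleton hs]
  constructor
  · rintro ⟨f, hf, f', hf', hne, hu, hu', hφ⟩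
    change ∀ s ∈ supplement V u f, _ at hf'
    change TSat M (supplement (supplement V u f) u' f') _ at hne hu hu' hφ
    have hconst : ∀ s ∈ supplement V u f, ∀ t ∈ supplement V u f, s u = t u := by
      intro s hs t ht
      obtain ⟨b, hb⟩ := hf' s hs
      obtain ⟨c, hc⟩ := hf' t ht
      simpa only [pupdate_of_ne _ _ huu'] using
        hu _ ⟨s, hs, b, hb, rfl⟩ _ ⟨t, ht, c, hc, rfl⟩ fun i => i.elim0
    have hVf : (supplement V u f).Nonempty := supplement_nonempty hV hf
    obtain ⟨t, ht⟩ : (supplement (supplement V u f) u' f').Nonempty := supplement_nonempty hVf hf'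
    obtain ⟨a, ha⟩ := exists_eq_supplement_const hV hf hconst
    obtain ⟨b, hb⟩ := exists_eq_supplement_const hVf hf'
      fun s hs t ht => hu' s hs t ht fun i => i.elim0
    rw [hb, ha] at hne hφ ht
    obtain ⟨a', b', ha', hb', hab'⟩ := hne t ht
    rw [apply_fst t ht, Option.some_inj] at ha'
    rw [apply_of_mem_supplement_singleton ht, Option.some_inj] at hb'
    exact ⟨a, b, by rwa [ha', hb'], hφ⟩
  · rintro ⟨a, b, hab, hφ⟩
    refine ⟨fun _ => {a}, fun _ _ => ⟨a, rfl⟩, fun _ => {b}, fun _ _ => ⟨b, rfl⟩,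
      fun t ht => ⟨a, b, apply_fst t ht, apply_of_mem_supplement_singleton ht, hab⟩,
      fun s hs t ht _ => ?_, fun s hs t ht _ => ?_, hφ⟩
    · exact (apply_fst s hs).trans (apply_fst t ht).symm
    · exact (apply_of_mem_supplement_singleton hs).trans
        (apply_of_mem_supplement_singleton ht).symm

end Satisfaction

section Translation

variable {σ : Type} {ar : σ → ℕ} {M : TModel σ ar} {S : Set M.A}

theorem TSat_expandY_rel_inr (U : Set (PAssign M.A)) (ts : Fin 1 → ℕ) :
    TSat (expandY M S) U (.rel (Sum.inr ()) ts) ↔ ∀ s ∈ U, ∃ a ∈ S, s (ts 0) = some a := by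
  refine forall₂_congr fun s _ => ⟨?_, ?_⟩
  · rintro ⟨vv, hvv, hS⟩
    exact ⟨vv (0 : Fin 1), hS, hvv (0 : Fin 1)⟩
  · rintro ⟨a, ha, hsa⟩
    exact ⟨fun _ => a, Fin.forall_fin_one.2 hsa, ha⟩

theorem TSat_expandY_nrel_inr (U : Set (PAssign M.A)) (ts : Fin 1 → ℕ) :
    TSat (expandY M S) U (.nrel (Sum.inr ()) ts) ↔ ∀ s ∈ U, ∃ a ∉ S, s (ts 0) = some a := by
  refine forall₂_congr fun s _ => ⟨?_, ?_⟩
  · rintro ⟨vv, hvv, hS⟩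
    exact ⟨vv (0 : Fin 1), hS, hvv (0 : Fin 1)⟩
  · rintro ⟨a, ha, hsa⟩
    exact ⟨fun _ => a, Fin.forall_fin_one.2 hsa, ha⟩

theorem range_get_sort (Z : Finset ℕ) : Set.range (Z.sort (· ≤ ·)).get = Z := by
  ext w
  simp [Set.range_list_get]

variable {y v u u' : ℕ}

theorem TSat_inflate_Ttr_or_iff
    (hy : y ∉ ({v, u, u'} : Finset ℕ)) (hv : v ∉ ({u, u'} : Finset ℕ)) {Z : Finset ℕ}
    (hZ : Disjoint Z {y, v, u, u'}) {r : PAssign M.A} {a b : M.A} (hu : r u = some a)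
    (hu' : r u' = some b) (hab : a ≠ b) (hS : S.Nonempty) {U : Set (PAssign M.A)}
    (hU : HasDomain U Z) (sd : Bool) (φ ψ : TLForm (σ ⊕ Unit) (arY ar)) :
    TSat M (inflate S y r U) (Ttr y v u u' Z sd (.or φ ψ)) ↔
      ∃ U₀ U₁ : Set (PAssign M.A), U₀ ⊆ U ∧ U₁ ⊆ U ∧ U₀ ∪ U₁ = U ∧
        TSat M (inflate S y (pupdate r v a) U₀) (Ttr y v u u' Z true φ) ∧
        TSat M (inflate S y (pupdate r v b) U₁) (Ttr y v u u' Z true ψ) := by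
  obtain ⟨hyv, hyu, hyu'⟩ : y ≠ v ∧ y ≠ u ∧ y ≠ u' := by simpa using hy
  obtain ⟨hvu, hvu'⟩ : v ≠ u ∧ v ≠ u' := by simpa using hv
  simp only [Finset.disjoint_insert_right, Finset.disjoint_singleton_right] at hZ
  obtain ⟨hyZ, hvZ, huZ, hu'Z⟩ := hZ
  rw [Ttr, TSat_ex_cindep_inflate_iff hU hS hyZ hyv.symm
    (by rw [range_get_sort, Finset.erase_eq_of_notMem hvZ]) ⟨0, rfl⟩ fun _ => Or.inl rfl,
    ← exists_flag_iff_exists_cover hab U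
      (fun U₀ => TSat M (inflate S y (pupdate r v a) U₀) (Ttr y v u u' Z true φ))
      (fun U₁ => TSat M (inflate S y (pupdate r v b) U₁) (Ttr y v u u' Z true ψ))]
  refine exists_congr fun f => and_congr_right fun _ => ?_
  have hUf : HasDomain (supplement U v f) (insert v Z) := hU.supplement v f
  rw [TSat_or_and_eq_iff hab
      (fun t ht => (apply_of_mem_inflate hUf ht (by simp [hvu.symm, huZ]) hyu.symm).trans hu)
      (fun t ht => (apply_of_mem_inflate hUf ht (by simp [hvu'.symm, hu'Z]) hyu'.symm).trans hu'),
    forall_inflate_supplement_iff hS hyv.symm, sep_inflate_supplement hU hvZ hyv.symm,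
    sep_inflate_supplement hU hvZ hyv.symm]

theorem TSat_inflate_Ttr_ex_iff {Z : Finset ℕ} (hZ : Disjoint Z {y, v}) {x : ℕ}
    (hx : x ∉ ({y, v} : Finset ℕ)) (hS : S.Nonempty) {r : PAssign M.A}
    {U : Set (PAssign M.A)} (hU : HasDomain U Z) (sd : Bool)
    (φ : TLForm (σ ⊕ Unit) (arY ar)) :
    TSat M (inflate S y r U) (Ttr y v u u' Z sd (.ex x φ)) ↔
      ∃ f : PAssign M.A → Set M.A, (∀ s ∈ U, (f s).Nonempty) ∧
        TSat M (inflate S y r (supplement U x f)) (Ttr y v u u' (insert x Z) sd φ) := by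
  have hZx : Disjoint (insert x Z) {y, v} := Finset.disjoint_insert_left.2 ⟨hx, hZ⟩
  simp only [Finset.disjoint_insert_right, Finset.disjoint_singleton_right] at hZ hZx
  simp only [Finset.mem_insert, not_or] at hx
  cases sd
  · exact TSat_ex_cindep_inflate_iff hU hS hZ.1 hx.1 (range_get_sort _) ⟨0, rfl⟩
      (fun _ => Or.inl rfl) _
  · refine TSat_ex_cindep_inflate_iff hU hS hZ.1 hx.1 (range_get_sort _) ⟨0, rfl⟩
      (fun i => ?_) _
    split
    · exact Or.inl rfl
    · exact Or.inr hZx.2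

theorem TSat_expandY_iff_TSat_inflate_Ttr_of_isAtomic (hS : S.Nonempty)
    {φ : TLForm (σ ⊕ Unit) (arY ar)} (hφ : φ.IsAtomic) {Z : Finset ℕ} (hy : y ∉ Z)
    (hfree : φ.freeVars ⊆ Z) {r : PAssign M.A} {U : Set (PAssign M.A)} (hU : HasDomain U Z)
    (sd : Bool) :
    TSat (expandY M S) U φ ↔ TSat M (inflate S y r U) (Ttr y v u u' Z sd φ) := by
  rcases φ with ⟨R | ⟨⟩, ts⟩ | ⟨R | ⟨⟩, ts⟩ | _ | _ | _ | _ | _ | _ | _ | _ | _ | _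
  case rel.inr =>
    exact (TSat_expandY_rel_inr U ts).trans (TSat_incl_inflate_iff hU hS hy
      (hfree (Finset.mem_image_of_mem ts (Finset.mem_univ _)))).symm
  case nrel.inr =>
    exact (TSat_expandY_nrel_inr U ts).trans (TSat_excl_inflate_iff hU hy
      (hfree (Finset.mem_image_of_mem ts (Finset.mem_univ _)))).symm
  case and | or | all | ex => exact hφ.elim
  all_goals
    rw [Ttr]
    symm
    exact TSat_inflate_iff (by trivial) hU hS hy hfree

theorem TSat_expandY_iff_TSat_inflate_Ttr
    (hy : y ∉ ({v, u, u'} : Finset ℕ)) (hv : v ∉ ({u, u'} : Finset ℕ)) (hS : S.Nonempty)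
    {φ : TLForm (σ ⊕ Unit) (arY ar)} (hφ : Disjoint φ.vars {y, v, u, u'})
    {Z : Finset ℕ} (hZ : Disjoint Z {y, v, u, u'}) (hfree : φ.freeVars ⊆ Z)
    {r : PAssign M.A} {a b : M.A} (hu : r u = some a) (hu' : r u' = some b) (hab : a ≠ b)
    {U : Set (PAssign M.A)} (hU : HasDomain U Z) (sd : Bool) :
    TSat (expandY M S) U φ ↔ TSat M (inflate S y r U) (Ttr y v u u' Z sd φ) := by
  induction φ generalizing Z r U sd with
  | and φ ψ ihφ ihψ =>
    obtain ⟨hφ, hψ⟩ := Finset.disjoint_union_left.1 hφ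
    obtain ⟨hfφ, hfψ⟩ := Finset.union_subset_iff.1 hfree
    exact and_congr (ihφ hφ hZ hfφ hu hu' hU sd) (ihψ hψ hZ hfψ hu hu' hU sd)
  | or φ ψ ihφ ihψ =>
    obtain ⟨hφ, hψ⟩ := Finset.disjoint_union_left.1 hφ
    obtain ⟨hfφ, hfψ⟩ := Finset.union_subset_iff.1 hfree
    rw [TSat_inflate_Ttr_or_iff hy hv hZ hu hu' hab hS hU]
    refine exists₂_congr fun U₀ U₁ => and_congr_right fun h₀ => and_congr_right fun h₁ =>
      and_congr_right fun _ => and_congr (ihφ hφ hZ hfφ ?_ ?_ (hU.mono h₀) true)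
        (ihψ hψ hZ hfψ ?_ ?_ (hU.mono h₁) true)
    all_goals grind [pupdate]
  | all x φ ih =>
    obtain ⟨hx, hφ⟩ := Finset.disjoint_insert_left.1 hφ
    have hxy : x ≠ y := fun h => hx (by simp [h])
    rw [Ttr, TSat_all_inflate_iff hxy]
    exact (TSat_all_iff (M := expandY M S) φ).trans <|
      ih hφ (Finset.disjoint_insert_left.2 ⟨hx, hZ⟩) (Finset.subset_insert_iff.2 hfree)
        hu hu' (hU.supplement x _) sd
  | ex x φ ih =>
    obtain ⟨hx, hφ⟩ := Finset.disjoint_insert_left.1 hφ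
    have hsub : ({y, v} : Finset ℕ) ⊆ {y, v, u, u'} := by grind
    rw [TSat_inflate_Ttr_ex_iff (hZ.mono_right hsub) (fun h => hx (hsub h)) hS hU]
    exact exists_congr fun f => and_congr_right fun _ =>
      ih hφ (Finset.disjoint_insert_left.2 ⟨hx, hZ⟩) (Finset.subset_insert_iff.2 hfree)
        hu hu' (hU.supplement x f) sd
  | _ =>
    exact TSat_expandY_iff_TSat_inflate_Ttr_of_isAtomic hS (by trivial)
      (Finset.disjoint_insert_right.1 hZ).1 hfree hU sd

end Translation

theorem stmt9_general (σ : Type) (ar : σ → ℕ) (M : TModel σ ar) (htwo : ∃ a b : M.A, a ≠ b)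
    (S : Set M.A) (hSne : S.Nonempty) (φ : TLForm (σ ⊕ Unit) (arY ar)) (hsent : φ.freeVars = ∅)
    (y v u u' : ℕ) (hdist : y ≠ v ∧ y ≠ u ∧ y ≠ u' ∧ v ≠ u ∧ v ≠ u' ∧ u ≠ u')
    (hfresh : y ∉ φ.vars ∧ v ∉ φ.vars ∧ u ∉ φ.vars ∧ u' ∉ φ.vars) :
    TSat (expandY M S) {(emptyA : PAssign M.A)} φ ↔
      TSat M {t | ∃ a ∈ S, t = pupdate emptyA y a}
        (.ex u (.ex u' (.and (.neq u u') (.and (.dep 0 Fin.elim0 u)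
          (.and (.dep 0 Fin.elim0 u') (Ttr y v u u' ∅ false φ)))))) := by
  obtain ⟨hyv, hyu, hyu', hvu, hvu', huu'⟩ := hdist
  have hdom : HasDomain {(emptyA : PAssign M.A)} ∅ := hasDomain_singleton_emptyA
  have hvars : Disjoint φ.vars {y, v, u, u'} := by simpa using hfresh
  have adequate : ∀ a b : M.A, a ≠ b → (TSat (expandY M S) {(emptyA : PAssign M.A)} φ ↔
      TSat M (inflate S y (pupdate (pupdate emptyA u a) u' b) {emptyA})
        (Ttr y v u u' ∅ false φ)) := fun a b hab =>
    TSat_expandY_iff_TSat_inflate_Ttr (by simp [*]) (by simp [*]) hSne hvars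
      (Finset.disjoint_empty_left _) hsent.subset (by rw [pupdate_of_ne _ _ huu', pupdate_self])
      (pupdate_self _ _ _) hab hdom false
  rw [← inflate_singleton_emptyA, TSat_ex_ex_dep_iff
    (inflate_nonempty hSne (Set.singleton_nonempty _)) huu']
  simp only [supplement_inflate_singleton hdom (Finset.notMem_empty _) hyu.symm,
    supplement_inflate_singleton hdom (Finset.notMem_empty _) hyu'.symm]
  constructor
  · intro h
    obtain ⟨a, b, hab⟩ := htwo
    exact ⟨a, b, hab, (adequate a b hab).1 h⟩
  · rintro ⟨a, b, hab, h⟩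
    exact (adequate a b hab).2 h

/-- Let `𝔄` be a model with at least two elements, `S ⊆ A` a nonempty finite set, `φ` a
sentence of dependence logic, `y` a variable not occurring in `φ` (and `v,u,u'` the
further fixed fresh variables of the translation), and `Y` a unary relation symbol
occurring neither in `φ` nor in the vocabulary of `𝔄`.  Then `(𝔄,Y↦S),{∅} ⊨ φ` iff
`𝔄,{∅}[S/y] ⊨ 𝕋_Y^y(φ)`, where `𝕋_Y^y(φ) = ∃u∃u'( u ≠ u' ∧ =(u) ∧ =(u') ∧ T_Y^y(φ) )`. -/
theorem stmt9 (σ : Type) (ar : σ → ℕ) (M : TModel σ ar)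
    (htwo : ∃ a b : M.A, a ≠ b)
    (S : Set M.A) (hSne : S.Nonempty) (hSfin : S.Finite)
    (φ : TLForm (σ ⊕ Unit) (arY ar))
    (hDL : φ.IsDL) (hsent : φ.freeVars = ∅)
    (hY : ¬ φ.UsesRel (Sum.inr ()))
    (y v u u' : ℕ)
    (hdist : y ≠ v ∧ y ≠ u ∧ y ≠ u' ∧ v ≠ u ∧ v ≠ u' ∧ u ≠ u')
    (hfresh : y ∉ φ.vars ∧ v ∉ φ.vars ∧ u ∉ φ.vars ∧ u' ∉ φ.vars) :
    TSat (expandY M S) {(emptyA : PAssign M.A)} φ ↔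
      TSat M {t | ∃ a ∈ S, t = pupdate emptyA y a}
        (.ex u (.ex u' (.and (.neq u u') (.and (.dep 0 Fin.elim0 u)
          (.and (.dep 0 Fin.elim0 u') (Ttr y v u u' ∅ false φ)))))) := by
  exact stmt9_general σ ar M htwo S hSne φ hsent y v u u' hdist hfresh
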